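/- Let \theta = 1 or -1, and let (y_n)_{n > K} \subset \mathbb{Q}\setminus\{-1,1\} be a solution of y_{n+1} + y_{n-1} = (a_n + b_n y_n)/(1 - y_n^2) with a_n, b_n \in \mathbb{Q} for each n. Define f_n = (1 - \theta y_n) y_{n+1} - y_n. If b_n - 2 - \theta f_n - \theta f_{n-1} = 0 for all n > K, then for all n > K: f_n - f_{n-1} - a_n = 0, f_n = (\theta a_n + b_n - 2)/(2\theta), and y_n solves the discrete Riccati equation y_{n+1} = (\tfrac12(a_n + \theta b_n - 2\theta) + y_n)/(1 - \theta y_n). -/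

import Mathlib

/-!
Since `θ² = 1`, the equation `(1 - y_n²)(y_{n+1} + y_{n-1}) = a_n + b_n y_n` can be rewritten as
`f_n - f_{n-1} - a_n = y_n (b_n - 2 - θ f_n - θ f_{n-1})`. When the bracket vanishes, the
difference `f_n - f_{n-1}` is `a_n` and the sum `f_n + f_{n-1}` is `θ (b_n - 2)`. Together they
determine `f_n`, and the definition of `f_n` then reads as a Riccati equation.
-/

/-- The quantity `f_n = (1 - θ y_n) y_{n+1} - y_n`: the value of `c` for which `y` takes the Riccati
step `(1 - θ y_n) y_{n+1} = c + y_n` at `n`. Indices are integers, so that `f_{n-1}` is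
`riccatiParameter θ y (n - 1)`. -/
def riccatiParameter {R : Type*} [Ring R] (θ : R) (y : ℤ → R) (n : ℤ) : R :=
  (1 - θ * y n) * y (n + 1) - y n

section CommRing

variable {R : Type*} [CommRing R] {θ a b : R} {y : ℤ → R} {n : ℤ}

theorem one_sub_sq_mul_add_eq_riccatiParameter (hθ : θ ^ 2 = 1) (y : ℤ → R) (n : ℤ) :
    (1 - y n ^ 2) * (y (n + 1) + y (n - 1)) =
      riccatiParameter θ y n - riccatiParameter θ y (n - 1) +
        (2 + θ * riccatiParameter θ y n + θ * riccatiParameter θ y (n - 1)) * y n := by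
  simp only [riccatiParameter, sub_add_cancel]
  linear_combination y n ^ 2 * (y (n + 1) + y (n - 1)) * hθ

theorem riccatiParameter_sub_riccatiParameter (hθ : θ ^ 2 = 1)
    (heq : (1 - y n ^ 2) * (y (n + 1) + y (n - 1)) = a + b * y n)
    (hb : b - 2 - θ * riccatiParameter θ y n - θ * riccatiParameter θ y (n - 1) = 0) :
    riccatiParameter θ y n - riccatiParameter θ y (n - 1) = a := by
  rw [one_sub_sq_mul_add_eq_riccatiParameter hθ] at heq
  linear_combination heq + y n * hb

theorem riccatiParameter_mul_two_mul_eq (hθ : θ ^ 2 = 1)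
    (heq : (1 - y n ^ 2) * (y (n + 1) + y (n - 1)) = a + b * y n)
    (hb : b - 2 - θ * riccatiParameter θ y n - θ * riccatiParameter θ y (n - 1) = 0) :
    riccatiParameter θ y n * (2 * θ) = θ * a + b - 2 := by
  have hdiff := riccatiParameter_sub_riccatiParameter hθ heq hb
  linear_combination θ * hdiff - hb

theorem one_sub_mul_ne_zero_of_sq_eq_one {t : R} (hθ : θ ^ 2 = 1) (ht : t ^ 2 ≠ 1) :
    1 - θ * t ≠ 0 := by
  intro h
  apply ht
  linear_combination -(1 + θ * t) * h - t ^ 2 * hθ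

end CommRing

section Field

variable {F : Type*} [Field F] {θ : F} {y : ℤ → F} {n : ℤ}

theorem eq_riccatiParameter_add_div (h : 1 - θ * y n ≠ 0) :
    y (n + 1) = (riccatiParameter θ y n + y n) / (1 - θ * y n) := by
  rw [riccatiParameter, sub_add_cancel, mul_div_cancel_left₀ _ h]

theorem riccati_from_vanishing_coefficient_general [NeZero (2 : F)] {a b : F}
    (hθ : θ ^ 2 = 1) (hy : y n ^ 2 ≠ 1)
    (heq : y (n + 1) + y (n - 1) = (a + b * y n) / (1 - y n ^ 2))
    (hb : b - 2 - θ * riccatiParameter θ y n - θ * riccatiParameter θ y (n - 1) = 0) :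
    riccatiParameter θ y n - riccatiParameter θ y (n - 1) - a = 0 ∧
      riccatiParameter θ y n = (θ * a + b - 2) / (2 * θ) ∧
      y (n + 1) = ((a + θ * b - 2 * θ) / 2 + y n) / (1 - θ * y n) := by
  have h_eq_mul : (1 - y n ^ 2) * (y (n + 1) + y (n - 1)) = a + b * y n := by
    rw [heq, mul_div_cancel₀ _ (sub_ne_zero.2 hy.symm)]
  have h_two_mul := riccatiParameter_mul_two_mul_eq hθ h_eq_mul hb
  refine ⟨sub_eq_zero.2 (riccatiParameter_sub_riccatiParameter hθ h_eq_mul hb), ?_, ?_⟩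
  · have hθ₀ : θ ≠ 0 := by
      rintro rfl
      simp at hθ
    rwa [eq_div_iff (mul_ne_zero two_ne_zero hθ₀)]
  · have h_param : riccatiParameter θ y n = (a + θ * b - 2 * θ) / 2 := by
      rw [eq_div_iff two_ne_zero]
      linear_combination θ * h_two_mul + (a - 2 * riccatiParameter θ y n) * hθ
    rw [← h_param]
    exact eq_riccatiParameter_add_div (one_sub_mul_ne_zero_of_sq_eq_one hθ hy)

end Field

/-- if `b_n - 2 - θ f_n - θ f_{n-1} ≡ 0` along the solution, then
`f_n - f_{n-1} - a_n = 0`, `f_n = (θ a_n + b_n - 2)/(2θ)`, and `y_n` solves the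
discrete Riccati equation, where `f_n = (1 - θ y_n) y_{n+1} - y_n`. -/
theorem riccati_from_vanishing_coefficient
    (θ : ℚ) (hθ : θ = 1 ∨ θ = -1) (K : ℤ) (a b y : ℤ → ℚ)
    (hy : ∀ n : ℤ, K < n → y n ≠ 1 ∧ y n ≠ -1)
    (heq : ∀ n : ℤ, K < n →
      y (n + 1) + y (n - 1) = (a n + b n * y n) / (1 - y n ^ 2))
    (hb : ∀ n : ℤ, K < n →
      b n - 2 - θ * ((1 - θ * y n) * y (n + 1) - y n)
        - θ * ((1 - θ * y (n - 1)) * y n - y (n - 1)) = 0) :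
    ∀ n : ℤ, K < n →
      ((1 - θ * y n) * y (n + 1) - y n) - ((1 - θ * y (n - 1)) * y n - y (n - 1)) - a n = 0 ∧
      (1 - θ * y n) * y (n + 1) - y n = (θ * a n + b n - 2) / (2 * θ) ∧
      y (n + 1) = ((a n + θ * b n - 2 * θ) / 2 + y n) / (1 - θ * y n) := by
  intro n hn
  simpa only [riccatiParameter, sub_add_cancel] using
    riccati_from_vanishing_coefficient_general (sq_eq_one_iff.2 hθ) (sq_ne_one_iff.2 (hy n hn))
      (heq n hn) (by simpa only [riccatiParameter, sub_add_cancel] using hb n hn)
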